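/- Let A ⊆ ℝⁿ be a convex body. Then binom(2n, n)⁻¹ · λ_n(supp g_A) ≤ g_A(0) ≤ 2⁻ⁿ · λ_n(supp g_A), where supp g_A denotes the closure of {x : g_A(x) ≠ 0} (which equals the difference set A + (−A)). -/

import Mathlib

open MeasureTheory Topology Filter Set

/-- The covariogram of a set `A ⊆ ℝⁿ`: `g_A(x) = λₙ(A ∩ (A + x))`. -/
noncomputable def covariogram {n : ℕ} (A : Set (EuclideanSpace ℝ (Fin n)))
    (x : EuclideanSpace ℝ (Fin n)) : ℝ :=
  (volume (A ∩ ((· + x) '' A))).toReal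

open scoped ENNReal Pointwise Nat

theorem ENNReal.four_mul_le_add_sq (x y : ℝ≥0∞) : 4 * (x * y) ≤ (x + y) ^ 2 := by
  by_cases hx : x = ∞
  · simp [hx]
  by_cases hy : y = ∞
  · simp [hy]
  lift x to NNReal using hx
  lift y to NNReal using hy
  have := four_mul_le_sq_add x y
  rw [mul_assoc] at this
  exact_mod_cast this

theorem Real.volume_add_volume_le_of_isCompact {K L C : Set ℝ} (hK : IsCompact K)
    (hL : IsCompact L) (hK₀ : K.Nonempty) (hL₀ : L.Nonempty)
    (h : ∀ a ∈ K, ∀ b ∈ L, (a + b) / 2 ∈ C) :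
    volume K + volume L ≤ 2 * volume C := by
  obtain ⟨k, hk, hkmax⟩ := hK.exists_isGreatest hK₀
  obtain ⟨l, hl, hlmin⟩ := hL.exists_isLeast hL₀
  have hdisj : AEDisjoint volume ((· + (-l)) ⁻¹' K) ((· + (-k)) ⁻¹' L) := by
    refine measure_mono_null (t := {k + l}) ?_ (by simp)
    rintro x ⟨hx, hy⟩
    have h₁ : x + (-l) ≤ k := hkmax hx
    have h₂ : l ≤ x + (-k) := hlmin hy
    simp only [mem_singleton_iff]
    linarith
  calc volume K + volume L
      = volume ((· + (-l)) ⁻¹' K) + volume ((· + (-k)) ⁻¹' L) := by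
        simp only [measure_preimage_add_right]
    _ = volume (((· + (-l)) ⁻¹' K) ∪ ((· + (-k)) ⁻¹' L)) :=
        (measure_union₀ ((hL.measurableSet.preimage (by fun_prop)).nullMeasurableSet) hdisj).symm
    _ ≤ volume ((· * (2⁻¹ : ℝ)) ⁻¹' C) := by
        refine measure_mono ?_
        rintro x (hx | hx)
        · have := h _ hx l hl
          simpa [div_eq_mul_inv] using this
        · have := h k hk _ hx
          simpa [div_eq_mul_inv] using this
    _ = 2 * volume C := by
        rw [Real.volume_preimage_mul_right (by norm_num)]
        norm_num

theorem Real.volume_add_volume_le {A B C : Set ℝ} (hA : MeasurableSet A)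
    (hB : MeasurableSet B) (hA₀ : A.Nonempty) (hB₀ : B.Nonempty)
    (h : ∀ a ∈ A, ∀ b ∈ B, (a + b) / 2 ∈ C) :
    volume A + volume B ≤ 2 * volume C := by
  obtain ⟨a, ha⟩ := hA₀
  obtain ⟨b, hb⟩ := hB₀
  rw [hA.measure_eq_iSup_isCompact, hB.measure_eq_iSup_isCompact]
  simp only [iSup_and']
  refine ENNReal.biSup_add_biSup_le' ⟨∅, by simp⟩ ⟨∅, by simp⟩ ?_
  rintro K ⟨hKA, hK⟩ L ⟨hLB, hL⟩
  calc volume K + volume L ≤ volume (insert a K) + volume (insert b L) := by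
        gcongr <;> exact subset_insert _ _
    _ ≤ 2 * volume C :=
        Real.volume_add_volume_le_of_isCompact (hK.insert a) (hL.insert b) (insert_nonempty _ _)
          (insert_nonempty _ _) fun x hx y hy ↦
            h x (insert_subset ha hKA hx) y (insert_subset hb hLB hy)

theorem lintegral_eq_lintegral_meas_lt_of_le_one {f : ℝ → ℝ≥0∞} (hf : Measurable f)
    (hf₁ : ∀ x, f x ≤ 1) :
    ∫⁻ x, f x = ∫⁻ t in Ioi (0 : ℝ), volume {x | ENNReal.ofReal t < f x} := by
  have hfin : ∀ x, f x ≠ ∞ := fun x ↦ ((hf₁ x).trans_lt ENNReal.one_lt_top).ne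
  have := lintegral_eq_lintegral_meas_lt volume (f := fun x ↦ (f x).toReal)
    (Eventually.of_forall fun x ↦ ENNReal.toReal_nonneg) hf.ennreal_toReal.aemeasurable
  simp only [ENNReal.ofReal_toReal (hfin _)] at this
  rw [this]
  refine setLIntegral_congr_fun measurableSet_Ioi fun t ht ↦ ?_
  simp only [ENNReal.ofReal_lt_iff_lt_toReal (le_of_lt ht) (hfin _)]

theorem lintegral_add_le_two_mul_of_sup_eq_one {f g h : ℝ → ℝ≥0∞} (hf : Measurable f)
    (hg : Measurable g) (hh : Measurable h) (hf₁ : ∀ x, f x ≤ 1) (hg₁ : ∀ x, g x ≤ 1)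
    (hf_sup : ∀ t < 1, ∃ x, t < f x) (hg_sup : ∀ t < 1, ∃ x, t < g x)
    (hfg : ∀ x y, f x * g y ≤ h ((x + y) / 2) ^ 2) :
    (∫⁻ x, f x) + ∫⁻ x, g x ≤ 2 * ∫⁻ x, h x := by
  calc (∫⁻ x, f x) + ∫⁻ x, g x
      = ∫⁻ t in Ioi (0 : ℝ), (volume {x | ENNReal.ofReal t < f x} +
          volume {x | ENNReal.ofReal t < g x}) := by
        rw [lintegral_eq_lintegral_meas_lt_of_le_one hf hf₁,
          lintegral_eq_lintegral_meas_lt_of_le_one hg hg₁, lintegral_add_left]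
        refine Antitone.measurable fun s t hst ↦ measure_mono fun x hx ↦ ?_
        exact (ENNReal.ofReal_le_ofReal hst).trans_lt hx
    _ ≤ ∫⁻ t in Ioi (0 : ℝ), 2 * volume {x | ENNReal.ofReal t < min (h x) 1} := by
        refine lintegral_mono fun t ↦ ?_
        rcases lt_or_ge (ENNReal.ofReal t) 1 with ht | ht
        · refine Real.volume_add_volume_le (measurableSet_lt measurable_const hf)
            (measurableSet_lt measurable_const hg) (hf_sup _ ht) (hg_sup _ ht) fun x hx y hy ↦ ?_
          refine lt_min ?_ ht
          refine lt_of_not_ge fun hle ↦ ?_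
          have := (ENNReal.mul_lt_mul hx hy).trans_le ((hfg x y).trans (pow_le_pow_left' hle 2))
          rw [sq] at this
          exact this.false
        · simp only [not_lt.2 ((hf₁ _).trans ht), not_lt.2 ((hg₁ _).trans ht)]
          simp
    _ = 2 * ∫⁻ x, min (h x) 1 := by
        rw [lintegral_const_mul' _ _ (by simp),
          ← lintegral_eq_lintegral_meas_lt_of_le_one (hh.min measurable_const)
            fun x ↦ min_le_right _ _]
    _ ≤ 2 * ∫⁻ x, h x := by
        gcongr
        exact min_le_left _ _

theorem prekopaLeindler_real_of_bounded {f g h : ℝ → ℝ≥0∞} (hf : Measurable f)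
    (hg : Measurable g) (hh : Measurable h) {M : ℝ≥0∞} (hM : M ≠ ∞) (hfM : ∀ x, f x ≤ M)
    (hgM : ∀ x, g x ≤ M) (hfg : ∀ x y, f x * g y ≤ h ((x + y) / 2) ^ 2) :
    (∫⁻ x, f x) * ∫⁻ x, g x ≤ (∫⁻ x, h x) ^ 2 := by
  set a := ⨆ x, f x with ha
  set b := ⨆ x, g x with hb
  have hfa : ∀ x, f x ≤ a := le_iSup f
  have hgb : ∀ x, g x ≤ b := le_iSup g
  have ha_top : a ≠ ∞ := ((iSup_le hfM).trans_lt hM.lt_top).ne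
  have hb_top : b ≠ ∞ := ((iSup_le hgM).trans_lt hM.lt_top).ne
  rcases eq_or_ne a 0 with ha₀ | ha₀
  · have : f = 0 := funext fun x ↦ le_antisymm ((hfa x).trans ha₀.le) zero_le
    simp [this]
  rcases eq_or_ne b 0 with hb₀ | hb₀
  · have : g = 0 := funext fun x ↦ le_antisymm ((hgb x).trans hb₀.le) zero_le
    simp [this]
  set c := (a * b) ^ (2⁻¹ : ℝ) with hc
  have hc_sq : c ^ 2 = a * b := by
    rw [hc, ← ENNReal.rpow_natCast, ← ENNReal.rpow_mul]
    norm_num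
  have key := lintegral_add_le_two_mul_of_sup_eq_one (f := fun x ↦ a⁻¹ * f x)
    (g := fun x ↦ b⁻¹ * g x) (h := fun x ↦ c⁻¹ * h x) (by fun_prop) (by fun_prop) (by fun_prop)
    (fun x ↦ by rw [ENNReal.inv_mul_le_iff ha₀ ha_top]; simpa using hfa x)
    (fun x ↦ by rw [ENNReal.inv_mul_le_iff hb₀ hb_top]; simpa using hgb x)
    (fun t ht ↦ by
      have : a * t < a := by simpa using ENNReal.mul_lt_mul_right ha₀ ha_top ht
      obtain ⟨x, hx⟩ := lt_iSup_iff.1 (this.trans_eq ha)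
      refine ⟨x, ?_⟩
      rw [mul_comm, ← div_eq_mul_inv]
      rw [ENNReal.lt_div_iff_mul_lt (Or.inl ha₀) (Or.inl ha_top), mul_comm]
      exact hx)
    (fun t ht ↦ by
      have : b * t < b := by simpa using ENNReal.mul_lt_mul_right hb₀ hb_top ht
      obtain ⟨x, hx⟩ := lt_iSup_iff.1 (this.trans_eq hb)
      refine ⟨x, ?_⟩
      rw [mul_comm, ← div_eq_mul_inv]
      rw [ENNReal.lt_div_iff_mul_lt (Or.inl hb₀) (Or.inl hb_top), mul_comm]
      exact hx)
    (fun x y ↦ by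
      rw [mul_pow, ← ENNReal.inv_pow, hc_sq, ENNReal.mul_inv (Or.inl ha₀) (Or.inl ha_top),
        mul_mul_mul_comm]
      gcongr
      exact hfg x y)
  rw [lintegral_const_mul _ hf, lintegral_const_mul _ hg, lintegral_const_mul _ hh] at key
  have h₄ : 4 * ((a * b)⁻¹ * ((∫⁻ x, f x) * ∫⁻ x, g x)) ≤
      4 * ((a * b)⁻¹ * (∫⁻ x, h x) ^ 2) := by
    calc 4 * ((a * b)⁻¹ * ((∫⁻ x, f x) * ∫⁻ x, g x))
        = 4 * ((a⁻¹ * ∫⁻ x, f x) * (b⁻¹ * ∫⁻ x, g x)) := by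
          rw [ENNReal.mul_inv (Or.inl ha₀) (Or.inl ha_top), mul_mul_mul_comm]
      _ ≤ (2 * (c⁻¹ * ∫⁻ x, h x)) ^ 2 :=
          (ENNReal.four_mul_le_add_sq _ _).trans (pow_le_pow_left' key 2)
      _ = 4 * ((a * b)⁻¹ * (∫⁻ x, h x) ^ 2) := by
          rw [← hc_sq, ENNReal.inv_pow]
          ring
  have hab₀ : a * b ≠ 0 := mul_ne_zero ha₀ hb₀
  have hab_top : a * b ≠ ∞ := ENNReal.mul_ne_top ha_top hb_top
  rwa [ENNReal.mul_le_mul_iff_right (by norm_num) (by norm_num),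
    ENNReal.mul_le_mul_iff_right (ENNReal.inv_ne_zero.2 hab_top) (ENNReal.inv_ne_top.2 hab₀)] at h₄

theorem lintegral_eq_iSup_min_natCast {f : ℝ → ℝ≥0∞} (hf : Measurable f) :
    ∫⁻ x, f x = ⨆ n : ℕ, ∫⁻ x, min (f x) n := by
  rw [← lintegral_iSup (fun n ↦ hf.min measurable_const)]
  · refine lintegral_congr fun x ↦ ?_
    rw [← inf_iSup_eq, ENNReal.iSup_natCast, inf_top_eq]
  · intro m n hmn x
    exact min_le_min le_rfl (by exact_mod_cast hmn)

/-- The Prékopa–Leindler inequality on the real line, with equal weights. -/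
theorem prekopaLeindler_real {f g h : ℝ → ℝ≥0∞} (hf : Measurable f) (hg : Measurable g)
    (hh : Measurable h) (hfg : ∀ x y, f x * g y ≤ h ((x + y) / 2) ^ 2) :
    (∫⁻ x, f x) * ∫⁻ x, g x ≤ (∫⁻ x, h x) ^ 2 := by
  rw [lintegral_eq_iSup_min_natCast hf, lintegral_eq_iSup_min_natCast hg]
  simp only [ENNReal.iSup_mul, ENNReal.mul_iSup]
  refine iSup_le fun m ↦ iSup_le fun n ↦ ?_
  refine prekopaLeindler_real_of_bounded (hf.min measurable_const) (hg.min measurable_const) hh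
    (M := (max m n : ℕ)) (ENNReal.natCast_ne_top _)
    (fun x ↦ (min_le_right _ _).trans (by exact_mod_cast le_max_right m n))
    (fun x ↦ (min_le_right _ _).trans (by exact_mod_cast le_max_left m n)) fun x y ↦ ?_
  exact (mul_le_mul' (min_le_left _ _) (min_le_left _ _)).trans (hfg x y)

theorem lintegral_pi_succ {n : ℕ} {f : (Fin (n + 1) → ℝ) → ℝ≥0∞} (hf : Measurable f) :
    ∫⁻ x, f x = ∫⁻ s : ℝ, ∫⁻ x : Fin n → ℝ, f (Fin.cons s x) := by
  have hmp := (volume_preserving_piFinSuccAbove (fun _ : Fin (n + 1) ↦ ℝ) 0).symm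
  rw [← hmp.lintegral_comp hf, Measure.volume_eq_prod, lintegral_prod _ (by fun_prop)]
  simp [MeasurableEquiv.piFinSuccAbove_symm_apply, Fin.insertNthEquiv]

/-- The Prékopa–Leindler inequality on `ℝⁿ`, with equal weights. -/
theorem prekopaLeindler_pi {n : ℕ} {f g h : (Fin n → ℝ) → ℝ≥0∞} (hf : Measurable f)
    (hg : Measurable g) (hh : Measurable h)
    (hfg : ∀ x y, f x * g y ≤ h ((2⁻¹ : ℝ) • (x + y)) ^ 2) :
    (∫⁻ x, f x) * ∫⁻ x, g x ≤ (∫⁻ x, h x) ^ 2 := by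
  induction n with
  | zero =>
    simp only [lintegral_unique, volume_pi, Measure.pi_univ, Finset.univ_eq_empty,
      Finset.prod_empty, mul_one]
    convert hfg default default
  | succ n ih =>
    have hcons : Measurable fun p : ℝ × (Fin n → ℝ) ↦ (Fin.cons p.1 p.2 : Fin (n + 1) → ℝ) :=
      measurable_pi_iff.2 fun i ↦ by
        refine Fin.cases ?_ (fun i ↦ ?_) i
        · simpa using measurable_fst
        · simpa using! (measurable_pi_apply i).comp measurable_snd
    have hmeas {u : (Fin (n + 1) → ℝ) → ℝ≥0∞} (hu : Measurable u) :
        Measurable fun s : ℝ ↦ ∫⁻ x : Fin n → ℝ, u (Fin.cons s x) :=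
      (hu.comp hcons).lintegral_prod_right'
    have hsec {u : (Fin (n + 1) → ℝ) → ℝ≥0∞} (hu : Measurable u) (s : ℝ) :
        Measurable fun x : Fin n → ℝ ↦ u (Fin.cons s x) :=
      (hu.comp hcons).comp measurable_prodMk_left
    rw [lintegral_pi_succ hf, lintegral_pi_succ hg, lintegral_pi_succ hh]
    refine prekopaLeindler_real (hmeas hf) (hmeas hg) (hmeas hh) fun s t ↦ ?_
    refine ih (hsec hf s) (hsec hg t) (hsec hh _) fun x y ↦ ?_
    convert hfg (Fin.cons s x) (Fin.cons t y) using 3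
    ext i
    refine Fin.cases ?_ (fun i ↦ ?_) i
    · simp; ring
    · simp [mul_add]

/-- The multiplicative Brunn–Minkowski inequality for midpoints of compact sets. -/
theorem volume_mul_volume_le_sq {n : ℕ} {A B : Set (EuclideanSpace ℝ (Fin n))}
    (hA : IsCompact A) (hB : IsCompact B) :
    volume A * volume B ≤ volume ((2⁻¹ : ℝ) • (A + B)) ^ 2 := by
  have hC : MeasurableSet ((2⁻¹ : ℝ) • (A + B)) := ((hA.add hB).smul _).measurableSet
  have hmp := PiLp.volume_preserving_toLp (Fin n)
  have hvol {S : Set (EuclideanSpace ℝ (Fin n))} (hS : MeasurableSet S) :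
      volume S = ∫⁻ x, (WithLp.toLp 2 ⁻¹' S).indicator (1 : (Fin n → ℝ) → ℝ≥0∞) x := by
    rw [lintegral_indicator_one (hmp.measurable hS), hmp.measure_preimage hS.nullMeasurableSet]
  rw [hvol hA.measurableSet, hvol hB.measurableSet, hvol hC]
  refine prekopaLeindler_pi (measurable_one.indicator (hmp.measurable hA.measurableSet))
    (measurable_one.indicator (hmp.measurable hB.measurableSet))
    (measurable_one.indicator (hmp.measurable hC)) fun x y ↦ ?_
  by_cases hx : WithLp.toLp 2 x ∈ A
  · by_cases hy : WithLp.toLp 2 y ∈ B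
    · have : WithLp.toLp 2 ((2⁻¹ : ℝ) • (x + y)) ∈ (2⁻¹ : ℝ) • (A + B) := by
        rw [WithLp.toLp_smul, WithLp.toLp_add]
        exact smul_mem_smul_set (add_mem_add hx hy)
      rw [indicator_of_mem (s := WithLp.toLp 2 ⁻¹' A) hx,
        indicator_of_mem (s := WithLp.toLp 2 ⁻¹' B) hy,
        indicator_of_mem (s := WithLp.toLp 2 ⁻¹' ((2⁻¹ : ℝ) • (A + B))) this]
      simp
    · rw [indicator_of_notMem (s := WithLp.toLp 2 ⁻¹' B) hy]; simp
  · rw [indicator_of_notMem (s := WithLp.toLp 2 ⁻¹' A) hx]; simp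

theorem integral_pow_mul_one_sub_pow (m n : ℕ) :
    ∫ t in (0 : ℝ)..1, t ^ m * (1 - t) ^ n = (m ! * n ! : ℝ) / (m + n + 1)! := by
  induction n generalizing m with
  | zero =>
    simp only [pow_zero, mul_one, integral_pow, Nat.factorial_succ, Nat.add_zero,
      Nat.factorial_zero]
    have : (m ! : ℝ) ≠ 0 := by positivity
    push_cast
    field_simp
    simp
  | succ n ih =>
    have hderiv (t : ℝ) : HasDerivAt (fun t : ℝ ↦ t ^ (m + 1) * (1 - t) ^ (n + 1))
        ((m + 1) * (t ^ m * (1 - t) ^ (n + 1)) - (n + 1) * (t ^ (m + 1) * (1 - t) ^ n)) t := by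
      have h₁ := hasDerivAt_pow (m + 1) t
      have h₂ := ((hasDerivAt_id t).const_sub 1).pow (n + 1)
      convert! h₁.mul h₂ using 1
      simp
      ring
    have hint := intervalIntegral.integral_eq_sub_of_hasDerivAt (a := 0) (b := 1)
      (fun t _ ↦ hderiv t) (Continuous.intervalIntegrable (by fun_prop) _ _)
    rw [intervalIntegral.integral_sub (Continuous.intervalIntegrable (by fun_prop) _ _)
      (Continuous.intervalIntegrable (by fun_prop) _ _), intervalIntegral.integral_const_mul,
      intervalIntegral.integral_const_mul, ih, sub_eq_iff_eq_add] at hint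
    have hm : (m + 1 : ℝ) ≠ 0 := by positivity
    rw [← mul_right_inj' hm, hint, show m + 1 + n + 1 = m + (n + 1) + 1 by ring,
      Nat.factorial_succ m, Nat.factorial_succ n]
    push_cast
    simp
    ring

theorem setLIntegral_one_sub_pow_mul_pow (k : ℕ) :
    ∫⁻ t in Ioc (0 : ℝ) 1, ENNReal.ofReal ((1 - t) ^ (k + 1)) * ENNReal.ofReal ((k + 1) * t ^ k) =
      ENNReal.ofReal ((Nat.choose (2 * (k + 1)) (k + 1) : ℝ)⁻¹) := by
  have hval : ∫ t in (0 : ℝ)..1, (1 - t) ^ (k + 1) * ((k + 1) * t ^ k) =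
      (Nat.choose (2 * (k + 1)) (k + 1) : ℝ)⁻¹ := by
    have h₁ (t : ℝ) : (1 - t) ^ (k + 1) * ((k + 1) * t ^ k) =
        (k + 1) * (t ^ k * (1 - t) ^ (k + 1)) := by ring
    simp only [h₁]
    rw [intervalIntegral.integral_const_mul, integral_pow_mul_one_sub_pow]
    have h₂ := Nat.add_choose_mul_factorial_mul_factorial (k + 1) (k + 1)
    rw [← two_mul] at h₂
    have h₃ : ((Nat.choose (2 * (k + 1)) (k + 1) : ℝ)) * (k + 1)! * (k + 1)! =
        (2 * (k + 1))! := by exact_mod_cast h₂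
    have h₄ : ((2 * (k + 1))! : ℝ) ≠ 0 := by positivity
    have h₅ : (Nat.choose (2 * (k + 1)) (k + 1) : ℝ) ≠ 0 := by
      exact_mod_cast (Nat.choose_pos (by omega)).ne'
    rw [show k + (k + 1) + 1 = 2 * (k + 1) by ring, ← mul_eq_one_iff_eq_inv₀ h₅, ← mul_div_assoc,
      div_mul_eq_mul_div, div_eq_one_iff_eq h₄, ← h₃, Nat.factorial_succ k]
    push_cast
    ring
  rw [← hval, intervalIntegral.integral_of_le zero_le_one, ofReal_integral_eq_lintegral_ofReal]
  · refine setLIntegral_congr_fun measurableSet_Ioc fun t ht ↦ ?_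
    exact (ENNReal.ofReal_mul (pow_nonneg (sub_nonneg.2 ht.2) _)).symm
  · exact (Continuous.intervalIntegrable (by fun_prop) 0 1).1
  · filter_upwards [ae_restrict_mem measurableSet_Ioc] with t ht
    exact mul_nonneg (pow_nonneg (sub_nonneg.2 ht.2) _)
      (mul_nonneg (by positivity) (pow_nonneg ht.1.le _))

section Covariogram

variable {n : ℕ} {A : Set (EuclideanSpace ℝ (Fin n))}

/-- The intersection of a convex set with its translate by `x = t (a - b)` contains a translate
of the copy of the set scaled by `1 - t`. -/
theorem ofReal_one_sub_pow_mul_volume_le (hconv : Convex ℝ A) {t : ℝ} (ht₀ : 0 ≤ t) (ht₁ : t ≤ 1)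
    {x : EuclideanSpace ℝ (Fin n)} (hx : x ∈ t • (A - A)) :
    ENNReal.ofReal ((1 - t) ^ n) * volume A ≤ volume (A ∩ ((· + x) '' A)) := by
  obtain ⟨_, ⟨a, ha, b, hb, rfl⟩, rfl⟩ := hx
  calc ENNReal.ofReal ((1 - t) ^ n) * volume A
      = volume ((t • a) +ᵥ ((1 - t) • A)) := by
        rw [measure_vadd, Measure.addHaar_smul_of_nonneg _ (sub_nonneg.2 ht₁),
          finrank_euclideanSpace_fin]
    _ ≤ volume (A ∩ ((· + t • (a - b)) '' A)) := by
        refine measure_mono ?_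
        rintro _ ⟨_, ⟨y, hy, rfl⟩, rfl⟩
        refine ⟨hconv ha hy ht₀ (sub_nonneg.2 ht₁) (by ring), t • b + (1 - t) • y,
          hconv hb hy ht₀ (sub_nonneg.2 ht₁) (by ring), ?_⟩
        simp only [vadd_eq_add, smul_sub]
        abel

theorem measurableSet_setOf_mem_and_sub_mem (hA : MeasurableSet A) :
    MeasurableSet {p : EuclideanSpace ℝ (Fin n) × EuclideanSpace ℝ (Fin n) |
      p.2 ∈ A ∧ p.2 - p.1 ∈ A} :=
  (measurable_snd hA).inter ((measurable_snd.sub measurable_fst) hA)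

theorem volume_inter_image_add_eq (x : EuclideanSpace ℝ (Fin n)) :
    volume (A ∩ ((· + x) '' A)) = volume (Prod.mk x ⁻¹'
      {p : EuclideanSpace ℝ (Fin n) × EuclideanSpace ℝ (Fin n) | p.2 ∈ A ∧ p.2 - p.1 ∈ A}) := by
  congr 1
  ext y
  simp [sub_eq_add_neg]

theorem measurable_volume_inter_image_add (hA : MeasurableSet A) :
    Measurable fun x ↦ volume (A ∩ ((· + x) '' A)) := by
  simp only [volume_inter_image_add_eq]
  exact measurable_measure_prodMk_left (measurableSet_setOf_mem_and_sub_mem hA)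

theorem lintegral_volume_inter_image_add (hA : MeasurableSet A) :
    ∫⁻ x, volume (A ∩ ((· + x) '' A)) = volume A * volume A := by
  have hS := measurableSet_setOf_mem_and_sub_mem hA
  simp only [volume_inter_image_add_eq]
  rw [← Measure.prod_apply hS, Measure.prod_apply_symm hS, ← lintegral_indicator_const hA]
  refine lintegral_congr fun y ↦ ?_
  by_cases hy : y ∈ A
  · rw [indicator_of_mem hy,
      ← (Measure.measurePreserving_sub_left volume y).measure_preimage hA.nullMeasurableSet]
    simp [hy, preimage]
  · simp [hy]

/-- The Rogers–Shephard inequality for the difference body. -/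
theorem volume_sub_self_le (hA : IsCompact A) (hconv : Convex ℝ A) (hA₀ : volume A ≠ 0) :
    ENNReal.ofReal ((Nat.choose (2 * n) n : ℝ)⁻¹) * volume (A - A) ≤ volume A := by
  have hA_top : volume A ≠ ∞ := hA.measure_lt_top.ne
  rcases n with _ | k
  · have hne : A.Nonempty := nonempty_of_measure_ne_zero hA₀
    rw [Subsingleton.eq_univ_of_nonempty hne]
    simp
  set G : EuclideanSpace ℝ (Fin (k + 1)) → ℝ≥0∞ := fun x ↦ volume (A ∩ ((· + x) '' A))
  have hG_meas : Measurable G := measurable_volume_inter_image_add hA.measurableSet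
  have hG_le (x) : G x ≤ volume A := measure_mono inter_subset_left
  have hratio_top (x) : G x / volume A ≠ ∞ :=
    ENNReal.div_ne_top ((hG_le x).trans_lt hA_top.lt_top).ne hA₀
  set f : EuclideanSpace ℝ (Fin (k + 1)) → ℝ :=
    fun x ↦ (G x / volume A).toReal ^ ((k + 1 : ℕ) : ℝ)⁻¹
  have hf_nonneg (x) : 0 ≤ f x := Real.rpow_nonneg ENNReal.toReal_nonneg _
  have hf_pow (x) : f x ^ (k + 1) = (G x / volume A).toReal :=
    Real.rpow_inv_natCast_pow ENNReal.toReal_nonneg k.succ_ne_zero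
  have hf_meas : Measurable f := by fun_prop
  have hlayer := lintegral_comp_eq_lintegral_meas_le_mul volume (f := f)
    (g := fun t ↦ (k + 1) * t ^ k) (Eventually.of_forall hf_nonneg) hf_meas.aemeasurable
    (fun t _ ↦ Continuous.intervalIntegrable (by fun_prop) _ _)
    (by
      filter_upwards [ae_restrict_mem measurableSet_Ioi] with t ht
      exact mul_nonneg (by positivity) (pow_nonneg (le_of_lt ht) _))
  have hprim (x) : ENNReal.ofReal (∫ t in 0..f x, (k + 1) * t ^ k) = G x / volume A := by
    rw [intervalIntegral.integral_const_mul, integral_pow,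
      mul_div_cancel₀ _ (by positivity)]
    simp only [ne_eq, k.succ_ne_zero, not_false_eq_true, zero_pow, sub_zero,
      hf_pow, ENNReal.ofReal_toReal (hratio_top x)]
  have hleft : ∫⁻ x, ENNReal.ofReal (∫ t in 0..f x, (k + 1) * t ^ k) = volume A := by
    simp only [hprim, div_eq_mul_inv]
    rw [lintegral_mul_const _ hG_meas, lintegral_volume_inter_image_add hA.measurableSet, mul_assoc,
      ENNReal.mul_inv_cancel hA₀ hA_top, mul_one]
  have hlevel {t : ℝ} (ht : t ∈ Ioc (0 : ℝ) 1) : (1 - t) • (A - A) ⊆ {x | t ≤ f x} := by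
    intro x hx
    have h := ofReal_one_sub_pow_mul_volume_le hconv (sub_nonneg.2 ht.2) (by linarith [ht.1]) hx
    rw [sub_sub_cancel] at h
    refine le_of_pow_le_pow_left₀ k.succ_ne_zero (hf_nonneg x) ?_
    rw [hf_pow, ← ENNReal.ofReal_le_iff_le_toReal (hratio_top x),
      ENNReal.le_div_iff_mul_le (Or.inl hA₀) (Or.inl hA_top)]
    exact h
  calc ENNReal.ofReal ((Nat.choose (2 * (k + 1)) (k + 1) : ℝ)⁻¹) * volume (A - A)
      = ∫⁻ t in Ioc (0 : ℝ) 1, volume ((1 - t) • (A - A)) *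
          ENNReal.ofReal ((k + 1) * t ^ k) := by
        rw [← setLIntegral_one_sub_pow_mul_pow, ← lintegral_mul_const _ (by fun_prop)]
        refine setLIntegral_congr_fun measurableSet_Ioc fun t ht ↦ ?_
        simp only [Measure.addHaar_smul_of_nonneg _ (sub_nonneg.2 ht.2),
          finrank_euclideanSpace_fin]
        ring
    _ ≤ ∫⁻ t in Ioc (0 : ℝ) 1, volume {x | t ≤ f x} * ENNReal.ofReal ((k + 1) * t ^ k) := by
        refine setLIntegral_mono' measurableSet_Ioc fun t ht ↦ ?_
        gcongr
        exact hlevel ht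
    _ ≤ ∫⁻ t in Ioi (0 : ℝ), volume {x | t ≤ f x} * ENNReal.ofReal ((k + 1) * t ^ k) :=
        lintegral_mono_set fun t ht ↦ ht.1
    _ = volume A := by rw [← hlayer, hleft]

theorem covariogram_zero (A : Set (EuclideanSpace ℝ (Fin n))) :
    covariogram A 0 = (volume A).toReal := by
  simp [covariogram]

theorem support_covariogram_subset (A : Set (EuclideanSpace ℝ (Fin n))) :
    Function.support (covariogram A) ⊆ A - A := by
  intro x hx
  have hne : (A ∩ ((· + x) '' A)).Nonempty := by
    refine nonempty_of_measure_ne_zero (μ := volume) fun h ↦ hx ?_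
    rw [covariogram, h, ENNReal.toReal_zero]
  obtain ⟨_, hy, a, ha, rfl⟩ := hne
  exact ⟨a + x, hy, a, ha, add_sub_cancel_left a x⟩

theorem covariogram_ne_zero (hA : IsCompact A) (hconv : Convex ℝ A) (hA₀ : volume A ≠ 0)
    {t : ℝ} (ht₀ : 0 ≤ t) (ht₁ : t < 1) {x : EuclideanSpace ℝ (Fin n)} (hx : x ∈ t • (A - A)) :
    covariogram A x ≠ 0 := by
  have hpos : 0 < ENNReal.ofReal ((1 - t) ^ n) * volume A :=
    ENNReal.mul_pos (ENNReal.ofReal_pos.2 (pow_pos (sub_pos.2 ht₁) n)).ne' hA₀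
  refine (ENNReal.toReal_pos ?_ ?_).ne'
  · exact (hpos.trans_le (ofReal_one_sub_pow_mul_volume_le hconv ht₀ ht₁.le hx)).ne'
  · exact ((measure_mono inter_subset_left).trans_lt hA.measure_lt_top).ne

theorem IsCompact.sub_self (hA : IsCompact A) : IsCompact (A - A) := by
  rw [sub_eq_add_neg]
  exact hA.add hA.neg

/-- The support of the covariogram of a convex body is its difference body. -/
theorem tsupport_covariogram (hA : IsCompact A) (hconv : Convex ℝ A) (hA₀ : volume A ≠ 0) :
    tsupport (covariogram A) = A - A := by
  refine subset_antisymm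
    (closure_minimal (support_covariogram_subset A) hA.sub_self.isClosed) fun x hx ↦ ?_
  have h₁ : (1 : ℝ) ∈ closure (Ico (0 : ℝ) 1) := by
    rw [closure_Ico zero_ne_one]
    exact right_mem_Icc.2 zero_le_one
  have := map_mem_closure (f := fun t : ℝ ↦ t • x) (t := Function.support (covariogram A))
    (by fun_prop) h₁
    fun t ht ↦ covariogram_ne_zero hA hconv hA₀ ht.1 ht.2 (smul_mem_smul_set hx)
  rwa [one_smul] at this

/-- The Brunn–Minkowski lower bound for the volume of the difference body. -/
theorem volume_le_volume_sub_self (hA : IsCompact A) :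
    volume A ≤ ENNReal.ofReal (((2 : ℝ) ^ n)⁻¹) * volume (A - A) := by
  have h := volume_mul_volume_le_sq hA hA.neg
  rw [Measure.measure_neg, ← sub_eq_add_neg, Measure.addHaar_smul_of_nonneg _ (by norm_num),
    finrank_euclideanSpace_fin, inv_pow, ← sq] at h
  exact (ENNReal.pow_le_pow_left_iff two_ne_zero).1 h

end Covariogram

/-- For a convex body `A ⊆ ℝⁿ`,
`binom(2n,n)⁻¹ λₙ(supp g_A) ≤ g_A(0) ≤ 2⁻ⁿ λₙ(supp g_A)`. -/
theorem covariogram_zero_bounds {n : ℕ} (A : Set (EuclideanSpace ℝ (Fin n)))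
    (hA : IsCompact A) (hconv : Convex ℝ A) (hint : (interior A).Nonempty) :
    ((Nat.choose (2 * n) n : ℝ))⁻¹ * (volume (tsupport (covariogram A))).toReal ≤
      covariogram A 0 ∧
    covariogram A 0 ≤ ((2 : ℝ) ^ n)⁻¹ * (volume (tsupport (covariogram A))).toReal := by
  have hA₀ : volume A ≠ 0 := (Measure.measure_pos_of_nonempty_interior volume hint).ne'
  have hD_top : volume (A - A) ≠ ∞ := hA.sub_self.measure_lt_top.ne
  rw [covariogram_zero, tsupport_covariogram hA hconv hA₀]
  constructor
  · have h := ENNReal.toReal_mono hA.measure_lt_top.ne (volume_sub_self_le hA hconv hA₀)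
    rwa [ENNReal.toReal_mul, ENNReal.toReal_ofReal (by positivity)] at h
  · have h := ENNReal.toReal_mono (ENNReal.mul_ne_top ENNReal.ofReal_ne_top hD_top)
      (volume_le_volume_sub_self hA)
    rwa [ENNReal.toReal_mul, ENNReal.toReal_ofReal (by positivity)] at h
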